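/- arXiv:2503.08868 — 4 statements merged into one kernel-verified Lean document; each statement's English description precedes it below -/
import Mathlib

section
/- For all integers m, n ≥ 0 with p = m + n ≥ 1, the set B(m,n) is finite and has exactly 3^{p−1} elements. -/
open Function Set

/-- The monic centered cubic polynomial `F_{a,v}(z) = z³ − 3a²z + (2a³ + v)`. -/
noncomputable def Fav (a v : ℂ) : ℂ → ℂ := fun z => z ^ 3 - 3 * a ^ 2 * z + (2 * a ^ 3 + v)

/-- The set `B(m,n)` of maps with `F^{∘m}(a) = −a` and `F^{∘n}(−a) = a`. -/
noncomputable def Bset (m n : ℕ) : Set (ℂ × ℂ) :=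
  {w | (Fav w.1 w.2)^[m] w.1 = -w.1 ∧ (Fav w.1 w.2)^[n] (-w.1) = w.1}


def Fg {R : Type*} [CommRing R] (a v : R) : R → R :=
  fun z => z ^ 3 - 3 * a ^ 2 * z + (2 * a ^ 3 + v)

lemma Fg_map {R S : Type*} [CommRing R] [CommRing S] (f : R →+* S) (a v z : R) (j : ℕ) :
    f ((Fg a v)^[j] z) = (Fg (f a) (f v))^[j] (f z) := by
  induction j with
  | zero => rfl
  | succ j ih =>
    rw [iterate_succ_apply', iterate_succ_apply', ← ih]
    simp only [Fg, map_add, map_sub, map_mul, map_pow, map_ofNat]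

lemma Fg_step {R : Type*} [CommRing R] (q r a v z e d h : R) (hq : q = 3 * r) :
    ∃ t, Fg (a + q * e) (v + q * d) (z + q * h) = Fg a v z + q * d + 3 * q * t := by
  refine ⟨z ^ 2 * h + z * q * h ^ 2 + r * q * h ^ 3
    - (2 * a * e * (z + q * h) + q * e ^ 2 * (z + q * h) + a ^ 2 * h)
    + 2 * (a ^ 2 * e + a * q * e ^ 2 + r * q * e ^ 3), ?_⟩
  subst hq
  simp only [Fg]
  ring

lemma Fg_iter {R : Type*} [CommRing R] (q r a v z e d h : R) (hq : q = 3 * r) (j : ℕ) :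
    ∃ t, (Fg (a + q * e) (v + q * d))^[j + 1] (z + q * h)
      = (Fg a v)^[j + 1] z + q * d + 3 * q * t := by
  induction j with
  | zero => exact Fg_step q r a v z e d h hq
  | succ j ih =>
    obtain ⟨t, ht⟩ := ih
    obtain ⟨s, hs⟩ := Fg_step q r a v ((Fg a v)^[j + 1] z) e d (d + 3 * t) hq
    refine ⟨s, ?_⟩
    rw [iterate_succ_apply', iterate_succ_apply' (Fg a v), ht, ← hs]
    congr 1
    ring

lemma newton {R : Type*} [CommRing R] (m n : ℕ) (q r a v : R) (hq : q = 3 * r)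
    (hP : q ∣ (Fg a v)^[m + 1] a + a) (hQ : q ∣ (Fg a v)^[n] (-a) - a) :
    ∃ a' v', q ∣ a' - a ∧ q ∣ v' - v ∧ 3 * q ∣ (Fg a' v')^[m + 1] a' + a' ∧
      3 * q ∣ (Fg a' v')^[n] (-a') - a' := by
  obtain ⟨P, hP⟩ := hP
  obtain ⟨Q, hQ⟩ := hQ
  rcases n with _ | n
  · obtain ⟨t, ht⟩ := Fg_iter q r a v a (-Q) (Q - P) (-Q) hq m
    refine ⟨a + q * (-Q), v + q * (Q - P), ⟨-Q, by ring⟩, ⟨Q - P, by ring⟩, ?_, ?_⟩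
    · rw [ht]
      exact ⟨t, by linear_combination hP⟩
    · simp only [iterate_zero, id] at hQ ⊢
      exact ⟨Q, by linear_combination hQ⟩
  · obtain ⟨t, ht⟩ := Fg_iter q r a v a (P - Q) (P + Q) (P - Q) hq m
    obtain ⟨s, hs⟩ := Fg_iter q r a v (-a) (P - Q) (P + Q) (-(P - Q)) hq n
    refine ⟨a + q * (P - Q), v + q * (P + Q), ⟨P - Q, by ring⟩, ⟨P + Q, by ring⟩, ?_, ?_⟩
    · rw [ht]
      exact ⟨t + P, by linear_combination hP⟩
    · rw [show -(a + q * (P - Q)) = -a + q * (-(P - Q)) by ring, hs]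
      exact ⟨s + Q, by linear_combination hQ⟩

lemma Fg_congr {R : Type*} [CommRing R] (q a v z a' v' z' : R) (ha : q ∣ a' - a)
    (hv : q ∣ v' - v) (hz : q ∣ z' - z) (j : ℕ) :
    q ∣ (Fg a' v')^[j] z' - (Fg a v)^[j] z := by
  simp only [← Ideal.mem_span_singleton, ← Ideal.Quotient.eq] at *
  rw [Fg_map, Fg_map, ha, hv, hz]

lemma hensel {R : Type*} [CommRing R] [hc : IsAdicComplete (Ideal.span {(3 : R)}) R] (m n : ℕ)
    (a v : R) (hP : 3 ∣ (Fg a v)^[m + 1] a + a) (hQ : 3 ∣ (Fg a v)^[n] (-a) - a) :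
    ∃ a' v', 3 ∣ a' - a ∧ 3 ∣ v' - v ∧ (Fg a' v')^[m + 1] a' = -a' ∧
      (Fg a' v')^[n] (-a') = a' := by
  let G : ℕ → R × R → Prop := fun k x => (3 : R) ^ (k + 1) ∣ (Fg x.1 x.2)^[m + 1] x.1 + x.1 ∧
      (3 : R) ^ (k + 1) ∣ (Fg x.1 x.2)^[n] (-x.1) - x.1
  have step : ∀ k x, G k x → ∃ y, G (k + 1) y ∧ (3 : R) ^ (k + 1) ∣ y.1 - x.1 ∧
      (3 : R) ^ (k + 1) ∣ y.2 - x.2 := by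
    rintro k ⟨a, v⟩ ⟨h1, h2⟩
    obtain ⟨a', v', h3, h4, h5, h6⟩ := newton m n _ (3 ^ k) a v (pow_succ' 3 k) h1 h2
    exact ⟨(a', v'), ⟨by rw [pow_succ']; exact h5, by rw [pow_succ']; exact h6⟩, h3, h4⟩
  choose! nx hnx1 hnx2 hnx3 using step
  let x : ℕ → R × R := fun k => Nat.rec (a, v) (fun k y => nx k y) k
  have hx : ∀ k, G k (x k) := by
    intro k
    induction k with
    | zero => 
      change (3 : R) ^ (0 + 1) ∣ (Fg a v)^[m + 1] a + a ∧ (3 : R) ^ (0 + 1) ∣ (Fg a v)^[n] (-a) - a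
      rw [zero_add, pow_one]
      exact ⟨hP, hQ⟩
    | succ k ih => exact hnx1 k _ ih
  have key : ∀ (y : ℕ → R), (∀ k, (3 : R) ^ (k + 1) ∣ y (k + 1) - y k) →
      ∃ L, ∀ k, (3 : R) ^ k ∣ L - y k := by
    intro y hy
    have hy' : ∀ k l, k ≤ l → (3 : R) ^ k ∣ y l - y k := by
      intro k l hkl
      induction l, hkl using Nat.le_induction with
      | base => simp
      | succ l hl ih =>
        have := (pow_dvd_pow (3 : R) (by omega : k ≤ l + 1)).trans (hy l)
        simpa using dvd_add this ih
    obtain ⟨L, hL⟩ := IsPrecomplete.prec (I := Ideal.span {(3 : R)}) (M := R) inferInstance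
      (f := y) (by
        intro k l hkl
        rw [SModEq.comm, SModEq.sub_mem, smul_eq_mul, Ideal.mul_top, Ideal.span_singleton_pow,
          Ideal.mem_span_singleton]
        exact hy' k l hkl)
    refine ⟨L, fun k => ?_⟩
    have := hL k
    rwa [SModEq.comm, SModEq.sub_mem, smul_eq_mul, Ideal.mul_top, Ideal.span_singleton_pow,
          Ideal.mem_span_singleton] at this
  have haus : ∀ z : R, (∀ k, (3 : R) ^ k ∣ z) → z = 0 := by
    intro z hz
    refine IsHausdorff.haus (I := Ideal.span {(3 : R)}) (M := R) inferInstance z fun k => ?_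
    rw [SModEq.zero, smul_eq_mul, Ideal.mul_top, Ideal.span_singleton_pow,
          Ideal.mem_span_singleton]
    exact hz k
  obtain ⟨A, hA⟩ := key (fun k => (x k).1) (fun k => hnx2 k _ (hx k))
  obtain ⟨V, hV⟩ := key (fun k => (x k).2) (fun k => hnx3 k _ (hx k))
  have h0a : (3 : R) ∣ (x 1).1 - a := by
    have h : (3 : R) ^ (0 + 1) ∣ (x 1).1 - a := hnx2 0 _ (hx 0)
    rwa [zero_add, pow_one] at h
  have h0v : (3 : R) ∣ (x 1).2 - v := by
    have h : (3 : R) ^ (0 + 1) ∣ (x 1).2 - v := hnx3 0 _ (hx 0)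
    rwa [zero_add, pow_one] at h
  refine ⟨A, V, ?_, ?_, ?_, ?_⟩
  · have := hA 1
    rw [pow_one] at this
    rw [← sub_add_sub_cancel]
    exact dvd_add this h0a
  · have := hV 1
    rw [pow_one] at this
    rw [← sub_add_sub_cancel]
    exact dvd_add this h0v
  · rw [← sub_eq_zero]
    refine haus _ fun k => ?_
    have h1 := (pow_dvd_pow (3 : R) (Nat.le_succ k)).trans (hx k).1
    have h2 := Fg_congr _ _ _ _ _ _ _ (hA k) (hV k) (hA k) (m + 1)
    have := dvd_add (dvd_add h1 h2) (hA k)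
    ring_nf at this ⊢
    exact this
  · rw [← sub_eq_zero]
    refine haus _ fun k => ?_
    have h1 := (pow_dvd_pow (3 : R) (Nat.le_succ k)).trans (hx k).2
    have h2 := Fg_congr _ _ _ (-(x k).1) _ _ (-A) (hA k) (hV k)
      (by have := dvd_neg.2 (hA k); ring_nf at this ⊢; exact this) n
    have := dvd_sub (dvd_add h1 h2) (hA k)
    ring_nf at this ⊢
    exact this

section char3
open Polynomial
noncomputable def Sp (k : Type*) [Field k] (j : ℕ) : k[X] := ∑ i ∈ Finset.range j, X ^ (3 ^ i)

lemma Sp_succ_eval (k : Type*) [Field k] [CharP k 3] (j : ℕ) (w : k) :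
    (Sp k (j + 1)).eval w = (Sp k j).eval w ^ 3 + w := by
  have : Fact (Nat.Prime 3) := ⟨Nat.prime_three⟩
  simp only [Sp, eval_finsetSum, eval_pow, eval_X]
  rw [sum_pow_char 3, Finset.sum_range_succ']
  simp [pow_succ, pow_mul]

lemma Fg_char3 (k : Type*) [Field k] [CharP k 3] (j : ℕ) (a v : k) :
    (Fg a v)^[j] a = a + (Sp k j).eval (v - a) := by
  have : Fact (Nat.Prime 3) := ⟨Nat.prime_three⟩
  have h3 : (3 : k) = 0 := by exact_mod_cast CharP.cast_eq_zero k 3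
  induction j with
  | zero => simp [Sp]
  | succ j ih =>
    rw [iterate_succ_apply', ih, Sp_succ_eval]
    simp only [Fg]
    generalize (Sp k j).eval (v - a) = s
    linear_combination (a ^ 2 * s + a * s ^ 2 - a ^ 2 * (a + s) + a ^ 3) * h3

lemma Sp_card (k : Type*) [Field k] [CharP k 3] [IsAlgClosed k] (j : ℕ) :
    ((Sp k (j + 1)).rootSet k).ncard = 3 ^ j := by
  have h3 : (3 : k) = 0 := by exact_mod_cast CharP.cast_eq_zero k 3
  have hd : (Sp k (j + 1)).natDegree = 3 ^ j := by
    induction j with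
    | zero => simp [Sp]
    | succ j ih =>
      rw [Sp, Finset.sum_range_succ, ← Sp, natDegree_add_eq_right_of_natDegree_lt]
      · simp
      · rw [ih, natDegree_X_pow]
        exact Nat.pow_lt_pow_right (by norm_num) (by omega)
  have hs : (Sp k (j + 1)).Separable := by
    have : derivative (Sp k (j + 1)) = 1 := by
      rw [Sp, Finset.sum_range_succ', derivative_add, derivative_sum]
      rw [Finset.sum_eq_zero]
      · simp
      · intro i _
        rw [derivative_X_pow]
        simp [pow_succ, h3]
    rw [Separable, this]
    exact isCoprime_one_right
  rw [← hd, ← card_rootSet_eq_natDegree (K := k) hs (IsAlgClosed.splits_domain _), Set.ncard_eq_toFinset_card']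
  simp
end char3

section upper
variable {R : Type*} [CommRing R] [Algebra ℂ R]

def Vf (a v : R) (w : ℕ) : Submodule ℂ R :=
  Submodule.span ℂ {x | ∃ i j, i + 2 * j ≤ w ∧ x = a ^ i * v ^ j}

lemma Vf_mono (a v : R) {w w' : ℕ} (h : w ≤ w') : Vf a v w ≤ Vf a v w' := by
  apply Submodule.span_mono
  rintro x ⟨i, j, h1, h2⟩
  exact ⟨i, j, h1.trans h, h2⟩

lemma Vf_mul (a v : R) {w w' u : ℕ} {x y : R} (hx : x ∈ Vf a v w) (hy : y ∈ Vf a v w')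
    (h : w + w' ≤ u) : x * y ∈ Vf a v u := by
  have h1 : x * y ∈ Vf a v w * Vf a v w' := Submodule.mul_mem_mul hx hy
  rw [Vf, Vf, Submodule.span_mul_span] at h1
  refine Submodule.span_mono ?_ h1
  rintro _ ⟨_, ⟨i, j, h1, rfl⟩, _, ⟨i', j', h2, rfl⟩, rfl⟩
  exact ⟨i + i', j + j', by omega, by simp only; ring⟩

lemma Vf_mon (a v : R) (i j : ℕ) {w : ℕ} (h : i + 2 * j ≤ w) : a ^ i * v ^ j ∈ Vf a v w :=
  Submodule.subset_span ⟨i, j, h, rfl⟩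

lemma Vf_smul (a v : R) (c : ℂ) {w : ℕ} {x : R} (h : x ∈ Vf a v w) :
    algebraMap ℂ R c * x ∈ Vf a v w := by
  rw [← Algebra.smul_def]; exact Submodule.smul_mem _ _ h

lemma Vf_nat (a v : R) (c : ℕ) {w : ℕ} {x : R} (h : x ∈ Vf a v w) :
    (c : R) * x ∈ Vf a v w := by
  simpa using Vf_smul a v (c : ℂ) h

lemma Vf_a (a v : R) (i : ℕ) {w : ℕ} (h : i ≤ w) : a ^ i ∈ Vf a v w := by
  simpa using Vf_mon a v i 0 (w := w) (by omega)

lemma Vf_v (a v : R) (i : ℕ) {w : ℕ} (h : 2 * i ≤ w) : v ^ i ∈ Vf a v w := by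
  simpa using Vf_mon a v 0 i (w := w) (by omega)

lemma Vf_cube (a v x y : R) (w : ℕ) (hw : 1 ≤ w) (hx : x ∈ Vf a v w) (hy : y ∈ Vf a v (w - 1)) :
    (x + y) ^ 3 - x ^ 3 ∈ Vf a v (3 * w - 1) := by
  have e : (x + y) ^ 3 - x ^ 3 = (3 : ℕ) * (x * x * y) + (3 : ℕ) * (x * (y * y)) + y * y * y := by
    push_cast; ring
  rw [e]
  have hxx := Vf_mul a v hx hx le_rfl
  have hyy := Vf_mul a v hy hy le_rfl
  refine add_mem (add_mem (Vf_nat _ _ _ ?_) (Vf_nat _ _ _ ?_)) ?_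
  · exact Vf_mul a v hxx hy (by omega)
  · exact Vf_mul a v hx hyy (by omega)
  · exact Vf_mul a v hyy hy (by omega)

lemma Vf_F (a v x y : R) (w : ℕ) (hw : 2 ≤ w) (hx : x ∈ Vf a v w) (hy : y ∈ Vf a v (w - 1)) :
    Fg a v (x + y) - x ^ 3 ∈ Vf a v (3 * w - 1) := by
  have e : Fg a v (x + y) - x ^ 3 = ((x + y) ^ 3 - x ^ 3) - (3 : ℕ) * (a ^ 2 * (x + y))
      + ((2 : ℕ) * a ^ 3 + v ^ 1) := by
    simp only [Fg]; push_cast; ring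
  rw [e]
  refine add_mem (sub_mem (Vf_cube a v x y w (by omega) hx hy) (Vf_nat _ _ _ ?_))
    (add_mem (Vf_nat _ _ _ (Vf_a a v 3 (by omega))) (Vf_v a v 1 (by omega)))
  exact Vf_mul a v (Vf_a a v 2 le_rfl) (add_mem hx (Vf_mono a v (by omega) hy)) (by omega)

lemma Vf_P (a v : R) (j : ℕ) : (Fg a v)^[j + 1] a - v ^ (3 ^ j) ∈ Vf a v (2 * 3 ^ j - 1) := by
  induction j with
  | zero =>
    have : (Fg a v)^[0 + 1] a - v ^ (3 ^ 0) = 0 := by simp [Fg]; ring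
    rw [this]; exact zero_mem _
  | succ j ih =>
    have h1 : 1 ≤ 3 ^ j := Nat.one_le_pow _ _ (by norm_num)
    have := Vf_F a v (v ^ 3 ^ j) _ (2 * 3 ^ j) (by omega) (Vf_v a v _ le_rfl) ih
    rw [add_sub_cancel, ← iterate_succ_apply' (Fg a v), ← pow_mul, ← pow_succ] at this
    convert this using 2
    ring

lemma Vf_Q (a v : R) (j : ℕ) : ∃ c : ℂ, c ≠ 0 ∧
    (Fg a v)^[j + 1] (-a) - algebraMap ℂ R c * a ^ (3 ^ (j + 1)) ∈ Vf a v (3 ^ (j + 1) - 1) := by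
  induction j with
  | zero =>
    refine ⟨4, by norm_num, ?_⟩
    have : (Fg a v)^[0 + 1] (-a) - algebraMap ℂ R 4 * a ^ (3 ^ (0 + 1)) = v ^ 1 := by
      rw [map_ofNat]; simp [Fg]; ring
    rw [this]; exact Vf_v a v 1 (by norm_num)
  | succ j ih =>
    obtain ⟨c, hc, ih⟩ := ih
    refine ⟨c ^ 3, pow_ne_zero _ hc, ?_⟩
    have h1 : 1 ≤ 3 ^ j := Nat.one_le_pow _ _ (by norm_num)
    have := Vf_F a v (algebraMap ℂ R c * a ^ 3 ^ (j + 1)) _ (3 ^ (j + 1))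
      (by rw [pow_succ]; omega) (Vf_smul _ _ _ (Vf_a a v _ le_rfl)) ih
    rw [add_sub_cancel, ← iterate_succ_apply' (Fg a v), mul_pow, ← pow_mul, ← pow_succ,
      ← map_pow] at this
    convert this using 2
    ring

lemma Vf_red (a v : R) (D E : ℕ) (hD : 1 ≤ D) (hE : 1 ≤ E) (hv : v ^ D ∈ Vf a v (2 * D - 1))
    (ha : a ^ E ∈ Vf a v (E - 1)) (w : ℕ) :
    Vf a v w ≤ Submodule.span ℂ (range fun x : Fin E × Fin D => a ^ (x.1 : ℕ) * v ^ (x.2 : ℕ)) := by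
  induction w using Nat.strong_induction_on with
  | _ w ih =>
    refine Submodule.span_le.2 ?_
    rintro _ ⟨i, j, hij, rfl⟩
    by_cases hi : i < E
    · by_cases hj : j < D
      · exact Submodule.subset_span ⟨(⟨i, hi⟩, ⟨j, hj⟩), rfl⟩
      · refine ih (w - 1) (by omega) ?_
        have := Vf_mul a v hv (Vf_mon a v i (j - D) le_rfl) (u := w - 1) (by omega)
        convert this using 1
        obtain ⟨l, rfl⟩ := Nat.exists_eq_add_of_le (not_lt.1 hj)
        rw [Nat.add_sub_cancel_left]; ring
    · refine ih (w - 1) (by omega) ?_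
      have := Vf_mul a v ha (Vf_mon a v (i - E) j le_rfl) (u := w - 1) (by omega)
      convert this using 1
      obtain ⟨l, rfl⟩ := Nat.exists_eq_add_of_le (not_lt.1 hi)
      rw [Nat.add_sub_cancel_left]; ring

lemma Vf_adjoin (a v x : R) (hx : x ∈ Algebra.adjoin ℂ {a, v}) : ∃ w, x ∈ Vf a v w := by
  induction hx using Algebra.adjoin_induction with
  | mem x hx =>
    rcases hx with rfl | rfl
    · exact ⟨1, by simpa using Vf_a x v 1 le_rfl⟩
    · exact ⟨2, by simpa using Vf_v a x 1 le_rfl⟩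
  | algebraMap r => exact ⟨0, by simpa using Vf_smul a v r (Vf_a a v 0 le_rfl)⟩
  | add x y _ _ hx hy =>
    obtain ⟨w, hw⟩ := hx
    obtain ⟨u, hu⟩ := hy
    exact ⟨w + u, add_mem (Vf_mono a v (by omega) hw) (Vf_mono a v (by omega) hu)⟩
  | mul x y _ _ hx hy =>
    obtain ⟨w, hw⟩ := hx
    obtain ⟨u, hu⟩ := hy
    exact ⟨w + u, Vf_mul a v hw hu le_rfl⟩

lemma Vf_final (a v : R) (m n : ℕ) (hP : (Fg a v)^[m + 1] a = -a) (hQ : (Fg a v)^[n] (-a) = a)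
    (hgen : Algebra.adjoin ℂ {a, v} = ⊤) : Module.finrank ℂ R ≤ 3 ^ (m + n) := by
  have hm : 1 ≤ 3 ^ m := Nat.one_le_pow _ _ (by norm_num)
  have hn : 1 ≤ 3 ^ n := Nat.one_le_pow _ _ (by norm_num)
  have hv : v ^ (3 ^ m) ∈ Vf a v (2 * 3 ^ m - 1) := by
    have h := Vf_P a v m
    rw [hP] at h
    have h2 : a ^ 1 ∈ Vf a v (2 * 3 ^ m - 1) := Vf_a a v 1 (by omega)
    have := neg_mem (add_mem h h2)
    convert this using 1
    ring
  have ha : a ^ (3 ^ n) ∈ Vf a v (3 ^ n - 1) := by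
    rcases n with _ | n
    · have h0 : a = 0 := by
        have h2 : algebraMap ℂ R 2 * a = 0 := by
          simp only [iterate_zero, id] at hQ
          rw [map_ofNat]
          linear_combination -hQ
        have : algebraMap ℂ R (1 / 2) * (algebraMap ℂ R 2 * a) = a := by
          rw [← mul_assoc, ← map_mul]; norm_num
        rw [← this, h2, mul_zero]
      rw [h0]; simp
    · obtain ⟨c, hc, h⟩ := Vf_Q a v n
      rw [hQ] at h
      have h1 : 1 ≤ 3 ^ n := Nat.one_le_pow _ _ (by norm_num)
      have h2 : a ^ 1 ∈ Vf a v (3 ^ (n + 1) - 1) := Vf_a a v 1 (by rw [pow_succ]; omega)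
      have := Vf_smul a v c⁻¹ (sub_mem h2 h)
      convert this using 1
      have e : algebraMap ℂ R c⁻¹ * algebraMap ℂ R c = 1 := by
        rw [← map_mul, inv_mul_cancel₀ hc, map_one]
      linear_combination (-(a ^ 3 ^ (n + 1))) * e
  have htop : Submodule.span ℂ
      (range fun x : Fin (3 ^ n) × Fin (3 ^ m) => a ^ (x.1 : ℕ) * v ^ (x.2 : ℕ)) = ⊤ := by
    rw [eq_top_iff]
    intro x _
    obtain ⟨w, hw⟩ := Vf_adjoin a v x (by rw [hgen]; trivial)
    exact Vf_red a v _ _ hm hn hv ha w hw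
  rw [← finrank_top ℂ R, ← htop]
  refine (finrank_range_le_card _).trans ?_
  simp [pow_add, mul_comm]
end upper

lemma adjoin_fun (T : Finset (ℂ × ℂ)) :
    Algebra.adjoin ℂ {(fun t => t.1.1 : T → ℂ), (fun t => t.1.2 : T → ℂ)} = ⊤ := by
  classical
  set S := Algebra.adjoin ℂ {(fun t => t.1.1 : T → ℂ), (fun t => t.1.2 : T → ℂ)} with hS
  have ha : (fun t => t.1.1 : T → ℂ) ∈ S := Algebra.subset_adjoin (by simp)
  have hv : (fun t => t.1.2 : T → ℂ) ∈ S := Algebra.subset_adjoin (by simp)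
  have aff : ∀ f ∈ S, ∀ t u : T, f t ≠ f u → ∃ g ∈ S, g t = 1 ∧ g u = 0 := by
    intro f hf t u h
    refine ⟨(f t - f u)⁻¹ • (f - algebraMap ℂ (T → ℂ) (f u)),
      S.smul_mem (sub_mem hf (S.algebraMap_mem _)) _, ?_, ?_⟩
    · simp [inv_mul_cancel₀ (sub_ne_zero.2 h)]
    · simp
  have sep : ∀ t u : T, ∃ g ∈ S, t ≠ u → (g t = 1 ∧ g u = 0) := by
    intro t u
    by_cases h : t = u
    · exact ⟨0, zero_mem _, fun h' => absurd h h'⟩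
    by_cases h1 : t.1.1 = u.1.1
    · have h2 : t.1.2 ≠ u.1.2 := fun h2 => h (Subtype.ext (Prod.ext h1 h2))
      obtain ⟨g, hg, h3⟩ := aff _ hv t u h2
      exact ⟨g, hg, fun _ => h3⟩
    · obtain ⟨g, hg, h3⟩ := aff _ ha t u h1
      exact ⟨g, hg, fun _ => h3⟩
  choose g hg hgs using sep
  have ind : ∀ t : T, Pi.single t (1 : ℂ) ∈ S := by
    intro t
    have : Pi.single t (1 : ℂ) = ∏ u ∈ Finset.univ.erase t, g t u := by
      ext s
      rw [Finset.prod_apply]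
      by_cases h : s = t
      · subst h
        rw [Pi.single_eq_same, Finset.prod_eq_one]
        intro u hu
        exact (hgs s u (Finset.ne_of_mem_erase hu).symm).1
      · rw [Pi.single_eq_of_ne h]
        exact (Finset.prod_eq_zero (f := fun c => g t c s) (Finset.mem_erase.2 ⟨h, Finset.mem_univ s⟩) (hgs t s (Ne.symm h)).2).symm
    rw [this]
    exact prod_mem fun u _ => hg t u
  rw [eq_top_iff]
  intro f _
  have : f = ∑ t, f t • Pi.single t (1 : ℂ) := by
    ext s
    rw [Finset.sum_apply]
    simp [Pi.single_apply]
  rw [this]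
  exact sum_mem fun t _ => S.smul_mem (ind t) _

lemma upper_bound (m n : ℕ) (T : Finset (ℂ × ℂ)) (hT : (T : Set (ℂ × ℂ)) ⊆ Bset (m + 1) n) :
    T.card ≤ 3 ^ (m + n) := by
  have ev : ∀ (t : T) (j : ℕ) (z : T → ℂ),
      (Fg (fun t => t.1.1 : T → ℂ) (fun t => t.1.2 : T → ℂ))^[j] z t
        = (Fav t.1.1 t.1.2)^[j] (z t) := fun t j z =>
    Fg_map (Pi.evalRingHom (fun _ : T => ℂ) t) _ _ z j
  have := Vf_final (R := T → ℂ) (fun t => t.1.1) (fun t => t.1.2) m n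
    (by ext t; rw [ev]; exact (hT t.2).1) (by ext t; rw [ev]; exact (hT t.2).2) (adjoin_fun T)
  simpa using this

open Cardinal in
lemma exists_embedding : ∃ φ : WittVector 3 (AlgebraicClosure (ZMod 3)) →+* ℂ, Injective φ := by
  have : Fact (Nat.Prime 3) := ⟨Nat.prime_three⟩
  set k := AlgebraicClosure (ZMod 3) with hk
  have hk0 : #k ≤ ℵ₀ := by
    have := Algebra.IsAlgebraic.cardinalMk_le_max (ZMod 3) k
    refine this.trans (max_le ?_ le_rfl)
    exact mk_le_aleph0
  have hW : #(WittVector 3 k) = 𝔠 := by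
    have e : WittVector 3 k ≃ (ℕ → k) := ⟨WittVector.coeff, WittVector.mk 3, fun x => by ext; simp, fun x => by ext; simp⟩
    rw [mk_congr e]
    simp only [mk_pi, prod_const, lift_id, mk_nat]
    apply le_antisymm
    · exact (power_le_power_right hk0).trans aleph0_power_aleph0.le
    · rw [← two_power_aleph0]
      refine power_le_power_right ?_
      rw [two_le_iff]
      exact exists_pair_ne k
  have h0 : CharZero (WittVector 3 k) := by
    obtain ⟨q, hq⟩ := CharP.exists (WittVector 3 k)
    rcases CharP.char_is_prime_or_zero (WittVector 3 k) q with h | h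
    · exfalso
      have h1 : ((q : ℕ) : k) = 0 := by
        have := congrArg (WittVector.constantCoeff (p := 3) (R := k))
          (CharP.cast_eq_zero (WittVector 3 k) q)
        simpa only [map_natCast, map_zero] using this
      rw [CharP.cast_eq_zero_iff k 3, Nat.prime_dvd_prime_iff_eq Nat.prime_three h] at h1
      subst h1
      exact (WittVector.irreducible 3 (k := k)).ne_zero (CharP.cast_eq_zero (WittVector 3 k) 3)
    · subst h
      exact CharP.charP_to_charZero _
  let K := FractionRing (WittVector 3 k)
  have hK : #K = 𝔠 := by rw [← hW]; exact IsFractionRing.cardinalMk (WittVector 3 k) K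
  have : CharZero K := IsFractionRing.charZero (R := WittVector 3 k)
  let L := AlgebraicClosure K
  have hL : #L = 𝔠 := by
    apply le_antisymm
    · refine (Algebra.IsAlgebraic.cardinalMk_le_max K L).trans ?_
      rw [hK]; exact max_le le_rfl aleph0_le_continuum
    · rw [← hK]; exact mk_le_of_injective (algebraMap K L).injective
  have : CharZero L := charZero_of_injective_algebraMap (algebraMap K L).injective
  obtain ⟨e⟩ := IsAlgClosed.ringEquiv_of_equiv_of_charZero (K := L) (L := ℂ)
    (by rw [hL]; exact aleph0_lt_continuum)
    (Cardinal.eq.1 (by rw [hL, mk_complex]))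
  refine ⟨(e : L →+* ℂ).comp ((algebraMap K L).comp (algebraMap _ K)), ?_⟩
  exact e.injective.comp ((algebraMap K L).injective.comp (IsFractionRing.injective _ K))

lemma lower_bound (m n : ℕ) : ∃ f : (Sp (AlgebraicClosure (ZMod 3)) (m + n + 1)).rootSet
    (AlgebraicClosure (ZMod 3)) → ℂ × ℂ, Injective f ∧ ∀ x, f x ∈ Bset (m + 1) n := by
  have : Fact (Nat.Prime 3) := ⟨Nat.prime_three⟩
  obtain ⟨φ, hφ⟩ := exists_embedding
  set k := AlgebraicClosure (ZMod 3) with hk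
  have hc : CharP k 3 := inferInstance
  have h3 : (3 : k) = 0 := by exact_mod_cast CharP.cast_eq_zero k 3
  let π : WittVector 3 k →+* k := WittVector.constantCoeff
  have hker : ∀ x : WittVector 3 k, 3 ∣ x ↔ π x = 0 := by
    intro x
    rw [← RingHom.mem_ker, WittVector.ker_constantCoeff, Ideal.mem_span_singleton]
    rfl
  have hac : IsAdicComplete (Ideal.span {(3 : WittVector 3 k)}) (WittVector 3 k) :=
    WittVector.isAdicCompleteIdealSpanP (p := 3) (k := k)
  have main : ∀ w : (Sp k (m + n + 1)).rootSet k, ∃ x : WittVector 3 k × WittVector 3 k,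
      π x.2 - π x.1 = w ∧ (Fg x.1 x.2)^[m + 1] x.1 = -x.1 ∧ (Fg x.1 x.2)^[n] (-x.1) = x.1 := by
    rintro ⟨w, hw⟩
    have hw0 : (Sp k (m + n + 1)).eval w = 0 := by
      simpa using (Polynomial.mem_rootSet.1 hw).2
    obtain ⟨a, ha⟩ := WittVector.constantCoeff_surjective (R := k) 3 ((Sp k (m + 1)).eval w)
    obtain ⟨v, hv⟩ := WittVector.constantCoeff_surjective (R := k) 3
      ((Sp k (m + 1)).eval w + w)
    change π a = _ at ha
    change π v = _ at hv
    have hva : π v - π a = w := by rw [ha, hv]; ring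
    have e1 : (Fg (π a) (π v))^[m + 1] (π a) = - π a := by
      rw [Fg_char3, hva, ← ha]
      linear_combination π a * h3
    have e2 : (Fg (π a) (π v))^[n] (-π a) = π a := by
      rw [← e1, ← iterate_add_apply, show n + (m + 1) = m + n + 1 by ring, Fg_char3, hva, hw0,
        add_zero]
    obtain ⟨a', v', h1, h2, h4, h5⟩ := hensel m n a v
      ((hker _).2 (by rw [map_add, Fg_map, e1]; ring))
      ((hker _).2 (by rw [map_sub, Fg_map, map_neg, e2]; ring))
    rw [hker, map_sub, sub_eq_zero] at h1 h2
    exact ⟨(a', v'), by simp only [h1, h2, hva], h4, h5⟩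
  choose x hx1 hx2 hx3 using main
  refine ⟨fun w => (φ (x w).1, φ (x w).2), ?_, ?_⟩
  · intro w w' h
    simp only [Prod.mk.injEq] at h
    apply Subtype.ext
    rw [← hx1 w, ← hx1 w', hφ h.1, hφ h.2]
  · intro w
    have h1 := congrArg φ (hx2 w)
    have h2 := congrArg φ (hx3 w)
    rw [Fg_map, map_neg] at h1 
    rw [Fg_map, map_neg] at h2
    exact ⟨h1, h2⟩

lemma stmt2_aux (m n : ℕ) :
    (Bset (m + 1) n).Finite ∧ (Bset (m + 1) n).ncard = 3 ^ (m + n) := by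
  have hfin : (Bset (m + 1) n).Finite := by
    by_contra h
    obtain ⟨T, hT, hc⟩ := Set.Infinite.exists_subset_card_eq h (3 ^ (m + n) + 1)
    have := upper_bound m n T hT
    omega
  refine ⟨hfin, le_antisymm ?_ ?_⟩
  · rw [Set.ncard_eq_toFinset_card _ hfin]
    exact upper_bound m n _ (by simp)
  · obtain ⟨f, hf, hm⟩ := lower_bound m n
    have h1 := Sp_card (AlgebraicClosure (ZMod 3)) (m + n)
    rw [← h1, ← Nat.card_coe_set_eq, ← Set.ncard_univ, ← Set.ncard_image_of_injective _ hf]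
    exact Set.ncard_le_ncard (by rintro _ ⟨y, _, rfl⟩; exact hm y) hfin

theorem stmt2 (m n : ℕ) (hmn : 1 ≤ m + n) :
    (Bset m n).Finite ∧ (Bset m n).ncard = 3 ^ (m + n - 1) := by
  rcases m with _ | m
  · rcases n with _ | n
    · omega
    · have e : Bset 0 (n + 1) = Bset (n + 1) 0 := by
        ext ⟨a, v⟩
        simp only [Bset, Set.mem_ofPred_eq, iterate_zero, id]
        constructor
        · rintro ⟨h1, h2⟩
          exact ⟨by rw [← h1] at h2; rw [h2, ← h1], h1.symm⟩
        · rintro ⟨h1, h2⟩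
          exact ⟨h2.symm, by rw [h2, h1, h2]⟩
      rw [e]
      simpa using stmt2_aux n 0
  · have := stmt2_aux m n
    rwa [show m + 1 + n - 1 = m + n by omega]
end

section
/- Let m′, n′, m, n ≥ 0 be integers with m′ + n′ > 0, m′ ≤ m, and n′ ≤ n. Then B(m′,n′) ⊆ B(m,n) if and only if m ≡ m′ (mod m′+n′) and n ≡ n′ (mod m′+n′). In particular, whenever B(m′,n′) ⊆ B(m,n), the integer m′+n′ divides m+n. -/
open Function Set

section
open Polynomial

/-- The cubic over any commutative ring. -/
def GG {A : Type*} [CommRing A] (a v : A) : A → A :=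
  fun z => z ^ 3 - 3 * a ^ 2 * z + (2 * a ^ 3 + v)

def PP {A : Type*} [CommRing A] (m : ℕ) (a v : A) : A := (GG a v)^[m] a + a

def QQ {A : Type*} [CommRing A] (n : ℕ) (a v : A) : A := (GG a v)^[n] (-a) - a

lemma GG_map {A B : Type*} [CommRing A] [CommRing B] (f : A →+* B) (a v z : A) (k : ℕ) :
    f ((GG a v)^[k] z) = (GG (f a) (f v))^[k] (f z) := by
  induction k with
  | zero => rfl
  | succ k ih =>
    rw [iterate_succ_apply', iterate_succ_apply', ← ih]
    simp only [GG, map_add, map_sub, map_mul, map_pow, map_ofNat]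

lemma PP_map {A B : Type*} [CommRing A] [CommRing B] (f : A →+* B) (a v : A) (k : ℕ) :
    f (PP k a v) = PP k (f a) (f v) := by
  simp [PP, GG_map]

lemma QQ_map {A B : Type*} [CommRing A] [CommRing B] (f : A →+* B) (a v : A) (k : ℕ) :
    f (QQ k a v) = QQ k (f a) (f v) := by
  simp [QQ, GG_map]

lemma three_zero (A : Type*) [CommRing A] [CharP A 3] : (3 : A) = 0 := by
  have := CharP.cast_eq_zero A 3
  simpa using this

lemma GG_char {A : Type*} [CommRing A] [CharP A 3] (a c z : A) :
    GG a (c + a ^ 3) z = z ^ 3 + c := by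
  have := three_zero A
  simp only [GG]
  linear_combination (a ^ 3 - a ^ 2 * z) * this

lemma pow_three_pow_add {A : Type*} [CommRing A] [CharP A 3] (x y : A) (k : ℕ) :
    (x + y) ^ 3 ^ k = x ^ 3 ^ k + y ^ 3 ^ k := by
  have : Fact (Nat.Prime 3) := ⟨Nat.prime_three⟩
  exact add_pow_char_pow x y 3 k

lemma pow_three_pow_sub {A : Type*} [CommRing A] [CharP A 3] (x y : A) (k : ℕ) :
    (x - y) ^ 3 ^ k = x ^ 3 ^ k - y ^ 3 ^ k := by
  have : Fact (Nat.Prime 3) := ⟨Nat.prime_three⟩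
  exact sub_pow_char_pow x y k

lemma GG_iter {A : Type*} [CommRing A] [CharP A 3] (a c z : A) (k : ℕ) :
    (GG a (c + a ^ 3))^[k] z = z ^ 3 ^ k + ∑ i ∈ Finset.range k, c ^ 3 ^ i := by
  induction k generalizing z with
  | zero => simp
  | succ k ih =>
    rw [iterate_succ_apply, ih, GG_char, pow_three_pow_add, Finset.sum_range_succ,
      ← pow_mul, ← pow_succ']
    ring

lemma GG_iter' {A : Type*} [CommRing A] [CharP A 3] (a b z : A) (k : ℕ) :
    (GG a ((b ^ 3 - b) + a ^ 3))^[k] z = (z + b) ^ 3 ^ k - b := by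
  induction k generalizing z with
  | zero => simp
  | succ k ih =>
    rw [iterate_succ_apply, ih, GG_char]
    have h : z ^ 3 + (b ^ 3 - b) + b = (z + b) ^ 3 := by
      have := pow_three_pow_add z b 1
      simp only [pow_one] at this
      rw [this]; ring
    rw [h, ← pow_mul, ← pow_succ']

lemma coeff_sum_one {A : Type*} [CommRing A] (k : ℕ) (hk : 1 ≤ k) :
    (∑ i ∈ Finset.range k, (X : A[X]) ^ 3 ^ i).coeff 1 = 1 := by
  rw [finsetSum_coeff, Finset.sum_eq_single 0]
  · simp
  · intro i _ hi
    rw [coeff_X_pow, if_neg]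
    intro h
    have := Nat.one_lt_pow hi (show 1 < 3 by norm_num)
    omega
  · intro h
    simp at h
    omega

lemma sum_pow_three {A : Type*} [CommRing A] [CharP A 3] {ι : Type*} (s : Finset ι) (f : ι → A)
    (k : ℕ) : (∑ i ∈ s, f i) ^ 3 ^ k = ∑ i ∈ s, f i ^ 3 ^ k := by
  have : Fact (Nat.Prime 3) := ⟨Nat.prime_three⟩
  exact sum_pow_char_pow 3 k s f

lemma elim_id {A : Type*} [CommRing A] [CharP A 3] (a c : A) (m n : ℕ) :
    ∑ i ∈ Finset.range n, (PP m a (c + a ^ 3)) ^ 3 ^ i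
      - ∑ j ∈ Finset.range m, (QQ n a (c + a ^ 3)) ^ 3 ^ j
      = 2 * ∑ i ∈ Finset.range (m + n), a ^ 3 ^ i := by
  have hneg : ∀ k, (-a) ^ 3 ^ k = - a ^ 3 ^ k := fun k =>
    Odd.neg_pow (Odd.pow (by decide)) a
  simp only [PP, QQ, GG_iter, hneg, pow_three_pow_add, pow_three_pow_sub, sum_pow_three,
    Finset.sum_add_distrib, Finset.sum_sub_distrib, ← pow_mul, ← pow_add]
  have h1 : ∑ i ∈ Finset.range n, ∑ j ∈ Finset.range m, c ^ 3 ^ (j + i)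
     = ∑ i ∈ Finset.range m, ∑ j ∈ Finset.range n, c ^ 3 ^ (j + i) := by
    rw [Finset.sum_comm]
    simp only [add_comm]
  have h2 : ∑ j ∈ Finset.range m, (-a ^ 3 ^ n) ^ 3 ^ j = - ∑ j ∈ Finset.range m, a ^ 3 ^ (n + j) := by
    rw [← Finset.sum_neg_distrib]
    refine Finset.sum_congr rfl fun j _ => ?_
    rw [Odd.neg_pow (Odd.pow (by decide)), ← pow_mul, ← pow_add]
  rw [h1, h2]
  have e1 := Finset.sum_range_add (fun i => a ^ 3 ^ i) m n
  have e2 := Finset.sum_range_add (fun i => a ^ 3 ^ i) n m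
  rw [add_comm n m] at e2
  linear_combination - e1 - e2

instance : Fact (Nat.Prime 3) := ⟨Nat.prime_three⟩

abbrev BB := (ZMod 3)[X][X]

lemma relprime (m n : ℕ) (h : 1 ≤ m + n) :
    IsRelPrime (PP m (C X : BB) (X + (C X) ^ 3)) (QQ n (C X : BB) (X + (C X) ^ 3)) := by
  intro D hP hQ
  have hS : D ∣ 2 * ∑ i ∈ Finset.range (m + n), (C X : BB) ^ 3 ^ i := by
    rw [← elim_id (C X : BB) X m n]
    refine dvd_sub (Finset.dvd_sum fun i _ => ?_) (Finset.dvd_sum fun i _ => ?_)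
    · exact hP.trans (dvd_pow_self _ (by positivity))
    · exact hQ.trans (dvd_pow_self _ (by positivity))
  have hS' : (2 * ∑ i ∈ Finset.range (m + n), (C X : BB) ^ 3 ^ i)
      = C (C 2 * ∑ i ∈ Finset.range (m + n), (X : (ZMod 3)[X]) ^ 3 ^ i) := by
    simp only [map_mul, map_sum, map_pow, map_ofNat]
  have hne : (C 2 * ∑ i ∈ Finset.range (m + n), (X : (ZMod 3)[X]) ^ 3 ^ i) ≠ 0 := by
    intro h0
    have := congrArg (fun q => Polynomial.coeff q 1) h0
    simp only [coeff_C_mul, coeff_sum_one _ h] at this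
    revert this
    simp only [coeff_zero]
    decide
  rw [hS'] at hS
  have hdeg : D.natDegree = 0 := by
    have := natDegree_le_of_dvd hS (C_ne_zero.2 hne)
    rw [natDegree_C] at this
    omega
  obtain ⟨d, rfl⟩ := natDegree_eq_zero.1 hdeg
  rw [C_dvd_iff_dvd_coeff] at hP hQ
  rw [isUnit_C]
  rcases Nat.eq_zero_or_pos m with hm | hm
  · have := hQ 1
    have hn : 1 ≤ n := by omega
    rw [QQ, GG_iter] at this
    have e : ((-(C X : BB)) ^ 3 ^ n + ∑ i ∈ Finset.range n, X ^ 3 ^ i - C X)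
      = C ((-X) ^ 3 ^ n - X) + ∑ i ∈ Finset.range n, X ^ 3 ^ i := by
      simp; ring
    rw [e, coeff_add, coeff_sum_one _ hn, coeff_C] at this
    simpa [isUnit_iff_dvd_one] using this
  · have := hP 1
    rw [PP, GG_iter] at this
    have e : (((C X : BB)) ^ 3 ^ m + ∑ i ∈ Finset.range m, X ^ 3 ^ i + C X)
      = C ((X) ^ 3 ^ m + X) + ∑ i ∈ Finset.range m, X ^ 3 ^ i := by
      simp; ring
    rw [e, coeff_add, coeff_sum_one _ hm, coeff_C] at this
    simpa [isUnit_iff_dvd_one] using this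

lemma PP_ne (m : ℕ) : PP m (C X : BB) (X + (C X) ^ 3) ≠ 0 := by
  intro h
  have := congrArg ((evalRingHom (1 : ZMod 3)).comp (evalRingHom (0 : (ZMod 3)[X]))) h
  rw [PP_map, PP] at this
  have e : ((evalRingHom (1 : ZMod 3)).comp (evalRingHom (0 : (ZMod 3)[X]))) (X + (C X) ^ 3)
     = 0 + (((evalRingHom (1 : ZMod 3)).comp (evalRingHom (0 : (ZMod 3)[X]))) (C X)) ^ 3 := by
    simp
  rw [e, GG_iter] at this
  have e2 : ∀ k : ℕ, ∑ i ∈ Finset.range k, (0 : ZMod 3) ^ 3 ^ i = 0 := fun k =>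
    Finset.sum_eq_zero fun i _ => zero_pow (by positivity)
  rw [e2] at this
  simp at this
  revert this
  decide

/-- reduction mod 3 -/
noncomputable def red : ℤ[X][X] →+* BB := mapRingHom (mapRingHom (Int.castRingHom (ZMod 3)))

lemma red_surj : Function.Surjective red :=
  map_surjective _ (map_surjective _ (ZMod.ringHom_surjective _))

lemma red_ker (f : ℤ[X][X]) (h : red f = 0) : ∃ g, f = 3 * g := by
  have : (C (C (3 : ℤ)) : ℤ[X][X]) ∣ f := by
    rw [C_dvd_iff_dvd_coeff]
    intro i
    rw [C_dvd_iff_dvd_coeff]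
    intro j
    have := congrArg (fun q => (q.coeff i).coeff j) h
    simp [red] at this
    exact (ZMod.intCast_zmod_eq_zero_iff_dvd _ 3).1 this
  obtain ⟨g, hg⟩ := this
  exact ⟨g, by rw [hg]; simp only [map_ofNat]⟩

lemma tors (m n : ℕ) (h : 1 ≤ m + n) (u : ℤ[X][X])
    (hu : 3 * u ∈ Ideal.span {PP m (C X : ℤ[X][X]) (X + (C X) ^ 3),
      QQ n (C X : ℤ[X][X]) (X + (C X) ^ 3)}) :
    u ∈ Ideal.span {PP m (C X : ℤ[X][X]) (X + (C X) ^ 3),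
      QQ n (C X : ℤ[X][X]) (X + (C X) ^ 3)} := by
  rw [Ideal.mem_span_pair] at hu ⊢
  obtain ⟨α, β, hab⟩ := hu
  have hP : red (PP m (C X : ℤ[X][X]) (X + (C X) ^ 3)) = PP m (C X : BB) (X + (C X) ^ 3) := by
    rw [PP_map]; simp [red]
  have hQ : red (QQ n (C X : ℤ[X][X]) (X + (C X) ^ 3)) = QQ n (C X : BB) (X + (C X) ^ 3) := by
    rw [QQ_map]; simp [red]
  have hr := congrArg red hab
  have h3 : red 3 = 0 := by
    rw [map_ofNat]; exact three_zero BB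
  rw [map_add, map_mul, map_mul, map_mul, hP, hQ, h3, zero_mul] at hr
  have hd : PP m (C X : BB) (X + (C X) ^ 3) ∣ red β * QQ n (C X : BB) (X + (C X) ^ 3) :=
    ⟨- red α, by linear_combination hr⟩
  have hd' := (relprime m n h).dvd_of_dvd_mul_right hd
  obtain ⟨γ', hγ'⟩ := hd'
  obtain ⟨γ, rfl⟩ := red_surj γ'
  obtain ⟨β', hβ'⟩ := red_ker (β - PP m (C X : ℤ[X][X]) (X + (C X) ^ 3) * γ) (by
    rw [map_sub, map_mul, hP, hγ', sub_self])
  obtain ⟨α', hα'⟩ := red_ker (α + QQ n (C X : ℤ[X][X]) (X + (C X) ^ 3) * γ) (by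
    rw [map_add, map_mul, hQ]
    apply mul_left_cancel₀ (PP_ne m)
    rw [hγ'] at hr
    linear_combination hr)
  refine ⟨α', β', ?_⟩
  have h3' : (3 : ℤ[X][X]) ≠ 0 := by norm_num
  apply mul_left_cancel₀ h3'
  linear_combination hab - PP m (C X : ℤ[X][X]) (X + (C X) ^ 3) * hα' -
    QQ n (C X : ℤ[X][X]) (X + (C X) ^ 3) * hβ'

lemma clear_den (f : MvPolynomial (Fin 2) ℚ) : ∃ k : ℤ, k ≠ 0 ∧ ∃ g : MvPolynomial (Fin 2) ℤ,
    MvPolynomial.map (Int.castRingHom ℚ) g = MvPolynomial.C (k : ℚ) * f := by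
  induction f using MvPolynomial.induction_on with
  | C q =>
    refine ⟨q.den, by exact_mod_cast q.den_nz, MvPolynomial.C q.num, ?_⟩
    rw [MvPolynomial.map_C, ← MvPolynomial.C_mul]
    congr 1
    simp [Rat.den_mul_eq_num]
  | add p q hp hq =>
    obtain ⟨k, hk, g, hg⟩ := hp
    obtain ⟨l, hl, g', hg'⟩ := hq
    refine ⟨k * l, mul_ne_zero hk hl, MvPolynomial.C l * g + MvPolynomial.C k * g', ?_⟩
    simp [hg, hg']
    ring
  | mul_X p i hp =>
    obtain ⟨k, hk, g, hg⟩ := hp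
    refine ⟨k, hk, g * MvPolynomial.X i, ?_⟩
    simp [hg]
    ring

lemma key (m n : ℕ) (h : 1 ≤ m + n) (R : MvPolynomial (Fin 2) ℤ)
    (hR : ∀ a v : ℂ, PP m a v = 0 → QQ n a v = 0 → MvPolynomial.aeval ![a, v] R = 0)
    {K : Type*} [Field K] [CharP K 3] (a c : K) (hP : PP m a (c + a ^ 3) = 0)
    (hQ : QQ n a (c + a ^ 3) = 0) : MvPolynomial.aeval ![a, c + a ^ 3] R = 0 := by
  classical
  let x : MvPolynomial (Fin 2) ℚ := MvPolynomial.X 0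
  let y : MvPolynomial (Fin 2) ℚ := MvPolynomial.X 1
  let x' : MvPolynomial (Fin 2) ℤ := MvPolynomial.X 0
  let y' : MvPolynomial (Fin 2) ℤ := MvPolynomial.X 1
  let μ : MvPolynomial (Fin 2) ℤ →+* MvPolynomial (Fin 2) ℚ := MvPolynomial.map (Int.castRingHom ℚ)
  have hx : μ x' = x := by simp [μ, x, x']
  have hy : μ y' = y := by simp [μ, y, y']
  have h1 : μ R ∈ (Ideal.span {PP m x y, QQ n x y}).radical := by
    rw [← MvPolynomial.vanishingIdeal_zeroLocus_eq_radical (K := ℂ),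
      MvPolynomial.mem_vanishingIdeal_iff]
    intro w hw
    rw [MvPolynomial.mem_zeroLocus_iff] at hw
    have e1 := hw _ (Ideal.subset_span (Set.mem_insert _ _))
    have e2 := hw _ (Ideal.subset_span (Set.mem_insert_of_mem _ (Set.mem_singleton _)))
    have e1' : PP m (w 0) (w 1) = 0 := by
      rw [← e1]
      have := PP_map (MvPolynomial.aeval (R := ℚ) w).toRingHom x y m
      simpa [x, y] using this.symm
    have e2' : QQ n (w 0) (w 1) = 0 := by
      rw [← e2]
      have := QQ_map (MvPolynomial.aeval (R := ℚ) w).toRingHom x y n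
      simpa [x, y] using this.symm
    have e3 := hR _ _ e1' e2'
    have hw2 : ![w 0, w 1] = w := by ext i; fin_cases i <;> rfl
    rw [hw2] at e3
    rw [← e3]
    exact MvPolynomial.aeval_map_algebraMap ℚ w R
  obtain ⟨N, hN⟩ := h1
  rw [Ideal.mem_span_pair] at hN
  obtain ⟨α, β, hαβ⟩ := hN
  obtain ⟨k, hk, α', hα'⟩ := clear_den α
  obtain ⟨l, hl, β', hβ'⟩ := clear_den β
  have h2 : MvPolynomial.C l * α' * PP m x' y' + MvPolynomial.C k * β' * QQ n x' y'
      = MvPolynomial.C (k * l) * R ^ N := by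
    apply MvPolynomial.map_injective (Int.castRingHom ℚ) Int.cast_injective
    change μ _ = μ _
    rw [map_add, map_mul, map_mul, map_mul, map_mul, PP_map, QQ_map, hx, hy, map_mul μ _ (R ^ N),
      map_pow, ← hαβ]
    change μ _ * MvPolynomial.map _ α' * _ + μ _ * MvPolynomial.map _ β' * _ = _
    rw [hα', hβ']
    simp [μ]
    ring
  let ψ : MvPolynomial (Fin 2) ℤ →+* ℤ[X][X] :=
    (MvPolynomial.aeval ![(C X : ℤ[X][X]), X + (C X) ^ 3]).toRingHom
  have hψx : ψ x' = C X := by simp [ψ, x']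
  have hψy : ψ y' = X + (C X) ^ 3 := by simp [ψ, y']
  have hψC : ∀ t : ℤ, ψ (MvPolynomial.C t) = (t : ℤ[X][X]) := by intro t; simp [ψ]
  have h3 : ((k * l : ℤ) : ℤ[X][X]) * (ψ R) ^ N ∈ Ideal.span {PP m (C X : ℤ[X][X]) (X + (C X) ^ 3),
      QQ n (C X : ℤ[X][X]) (X + (C X) ^ 3)} := by
    rw [Ideal.mem_span_pair]
    refine ⟨ψ (MvPolynomial.C l * α'), ψ (MvPolynomial.C k * β'), ?_⟩
    have := congrArg ψ h2
    rw [map_add, map_mul _ _ (PP m x' y'), map_mul _ _ (QQ n x' y'), PP_map, QQ_map, hψx, hψy,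
      map_mul _ _ (R ^ N), hψC, map_pow] at this
    exact this
  have hkl : k * l ≠ 0 := mul_ne_zero hk hl
  obtain ⟨e, M, hM, hkM⟩ : ∃ (e : ℕ) (M : ℤ), ¬ (3 : ℤ) ∣ M ∧ k * l = 3 ^ e * M := by
    have hf : FiniteMultiplicity (3 : ℤ) (k * l) := Int.finiteMultiplicity_iff.2 ⟨by decide, hkl⟩
    obtain ⟨M, h1, h2⟩ := hf.exists_eq_pow_mul_and_not_dvd
    exact ⟨_, M, h2, h1⟩
  rw [hkM] at h3
  have h4 : (M : ℤ[X][X]) * (ψ R) ^ N ∈ Ideal.span {PP m (C X : ℤ[X][X]) (X + (C X) ^ 3),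
      QQ n (C X : ℤ[X][X]) (X + (C X) ^ 3)} := by
    clear hkM
    induction e with
    | zero => simpa using h3
    | succ e ih =>
      apply ih
      apply tors m n h
      convert h3 using 1
      push_cast
      ring
  let ev : ℤ[X][X] →+* K := eval₂RingHom (eval₂RingHom (Int.castRingHom K) a) c
  have hev1 : ev (C X) = a := by simp [ev]
  have hev2 : ev (X + (C X) ^ 3) = c + a ^ 3 := by
    rw [map_add, map_pow, hev1]; simp [ev]
  have h5 : ev ((M : ℤ[X][X]) * (ψ R) ^ N) = 0 := by
    rw [Ideal.mem_span_pair] at h4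
    obtain ⟨s, t, hst⟩ := h4
    rw [← hst, map_add, map_mul, map_mul, PP_map, QQ_map, hev1, hev2, hP, hQ]
    simp
  have h6 : ev (ψ R) = MvPolynomial.aeval ![a, c + a ^ 3] R := by
    have : ev.comp ψ = (MvPolynomial.aeval ![a, c + a ^ 3] : MvPolynomial (Fin 2) ℤ →ₐ[ℤ] K).toRingHom := by
      apply MvPolynomial.ringHom_ext
      · intro t; simp
      · intro i
        fin_cases i
        · simpa [ψ] using hev1
        · simpa [ψ] using hev2
    exact congrArg (fun f => f R) this
  rw [map_mul, map_pow, h6, map_intCast, mul_eq_zero] at h5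
  rcases h5 with h5 | h5
  · exact absurd ((CharP.intCast_eq_zero_iff K 3 M).1 h5) hM
  · exact eq_zero_of_pow_eq_zero h5

lemma exists_gen (p : ℕ) (hp : p ≠ 0) : ∃ x : GaloisField 3 p, ∀ k : ℕ, x ^ 3 ^ k = x → p ∣ k := by
  have : Finite (GaloisField 3 p) := inferInstance
  have := Fintype.ofFinite (GaloisField 3 p)
  obtain ⟨g, hg⟩ := IsCyclic.exists_generator (α := (GaloisField 3 p)ˣ)
  refine ⟨g, fun k hk => ?_⟩
  have ho : orderOf g = 3 ^ p - 1 := by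
    rw [orderOf_eq_card_of_forall_mem_zpowers hg, Nat.card_units, GaloisField.card 3 p hp]
  have h1 : g ^ (3 ^ k - 1) = 1 := by
    have : g ^ 3 ^ k = g := by ext; simpa using hk
    have h3 : 3 ^ k = (3 ^ k - 1) + 1 := by have := pow_pos (show 0 < 3 by norm_num) k; omega
    rw [h3, pow_succ] at this
    exact mul_eq_right.1 this
  have h2 := orderOf_dvd_of_pow_eq_one h1
  rw [ho] at h2
  have h4 := Nat.pow_sub_one_gcd_pow_sub_one 3 p k
  rw [Nat.gcd_eq_left h2] at h4
  have h5 : 3 ^ p = 3 ^ (p.gcd k) := by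
    have := pow_pos (show 0 < 3 by norm_num) p
    have := pow_pos (show 0 < 3 by norm_num) (p.gcd k)
    omega
  have h6 := Nat.pow_right_injective (le_refl 2 |>.trans (by norm_num : 2 ≤ 3)) h5
  rw [h6]
  exact Nat.gcd_dvd_right _ _

lemma mem_Bset (m n : ℕ) (a v : ℂ) : (a, v) ∈ Bset m n ↔ PP m a v = 0 ∧ QQ n a v = 0 := by
  have : Fav a v = GG a v := rfl
  simp [Bset, PP, QQ, this, sub_eq_zero, eq_neg_iff_add_eq_zero]

lemma forward (m' n' m n : ℕ) (h0 : 1 ≤ m' + n') (hm : m' ≤ m) (hn : n' ≤ n)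
    (hB : Bset m' n' ⊆ Bset m n) : m ≡ m' [MOD m' + n'] ∧ n ≡ n' [MOD m' + n'] := by
  obtain ⟨x, hx⟩ := exists_gen (m' + n') (by omega)
  have hxp : x ^ 3 ^ (m' + n') = x := by
    have := Fintype.ofFinite (GaloisField 3 (m' + n'))
    have := FiniteField.pow_card x
    rwa [← Nat.card_eq_fintype_card, GaloisField.card 3 _ (by omega)] at this
  have h3 := three_zero (GaloisField 3 (m' + n'))
  obtain ⟨a, ha⟩ : ∃ a, a = x ^ 3 ^ m' - x := ⟨_, rfl⟩
  obtain ⟨b, hb⟩ : ∃ b, b = -(x + x ^ 3 ^ m') := ⟨_, rfl⟩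
  have hab : a + b = x := by rw [ha, hb]; linear_combination (-x) * h3
  have hab' : -a + b = x ^ 3 ^ m' := by rw [ha, hb]; linear_combination (-x ^ 3 ^ m') * h3
  have eP : ∀ k, PP k a ((b ^ 3 - b) + a ^ 3) = x ^ 3 ^ k - x ^ 3 ^ m' := by
    intro k
    rw [PP, GG_iter', hab]
    linear_combination - hab'
  have eQ : ∀ k, QQ k a ((b ^ 3 - b) + a ^ 3) = x ^ 3 ^ (m' + k) - x := by
    intro k
    rw [QQ, GG_iter', hab', ← pow_mul, ← pow_add]
    linear_combination - hab
  have P0 : PP m' a ((b ^ 3 - b) + a ^ 3) = 0 := by rw [eP, sub_self]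
  have Q0 : QQ n' a ((b ^ 3 - b) + a ^ 3) = 0 := by rw [eQ, hxp, sub_self]
  have ae : ∀ {A : Type} [CommRing A] (s t : A) (k : ℕ), MvPolynomial.aeval ![s, t]
      (PP k (MvPolynomial.X 0) (MvPolynomial.X 1) : MvPolynomial (Fin 2) ℤ) = PP k s t := by
    intro A _ s t k
    have := PP_map (MvPolynomial.aeval (R := ℤ) ![s, t]).toRingHom (MvPolynomial.X 0) (MvPolynomial.X 1) k
    simpa using this
  have ae' : ∀ {A : Type} [CommRing A] (s t : A) (k : ℕ), MvPolynomial.aeval ![s, t]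
      (QQ k (MvPolynomial.X 0) (MvPolynomial.X 1) : MvPolynomial (Fin 2) ℤ) = QQ k s t := by
    intro A _ s t k
    have := QQ_map (MvPolynomial.aeval (R := ℤ) ![s, t]).toRingHom (MvPolynomial.X 0) (MvPolynomial.X 1) k
    simpa using this
  have k1 := key m' n' h0 (PP m (MvPolynomial.X 0) (MvPolynomial.X 1)) (fun s t h1 h2 => by
    rw [ae]
    exact ((mem_Bset m n s t).1 (hB ((mem_Bset m' n' s t).2 ⟨h1, h2⟩))).1) a (b ^ 3 - b) P0 Q0
  have k2 := key m' n' h0 (QQ n (MvPolynomial.X 0) (MvPolynomial.X 1)) (fun s t h1 h2 => by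
    rw [ae']
    exact ((mem_Bset m n s t).1 (hB ((mem_Bset m' n' s t).2 ⟨h1, h2⟩))).2) a (b ^ 3 - b) P0 Q0
  rw [ae, eP] at k1
  rw [ae', eQ] at k2
  constructor
  · refine ((Nat.modEq_iff_dvd' hm).2 (hx _ ?_)).symm
    have e : (x ^ 3 ^ (m - m') - x) ^ 3 ^ m' = 0 := by
      rw [pow_three_pow_sub, ← pow_mul, ← pow_add, Nat.sub_add_cancel hm, k1]
    exact sub_eq_zero.1 (eq_zero_of_pow_eq_zero e)
  · have := hx _ (sub_eq_zero.1 k2)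
    refine ((Nat.modEq_iff_dvd' hn).2 ?_).symm
    have e : m' + n = (n - n') + (m' + n') := by omega
    rw [e] at this
    exact (Nat.dvd_add_left (dvd_refl _)).1 this

lemma backward (m' n' m n : ℕ) (hm : m' ≤ m) (hn : n' ≤ n)
    (h1 : m ≡ m' [MOD m' + n']) (h2 : n ≡ n' [MOD m' + n']) : Bset m' n' ⊆ Bset m n := by
  rintro ⟨a, v⟩ ⟨hP, hQ⟩
  simp only at hP hQ
  obtain ⟨k, hk⟩ := (Nat.modEq_iff_dvd' hm).1 h1.symm
  obtain ⟨l, hl⟩ := (Nat.modEq_iff_dvd' hn).1 h2.symm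
  have p1 : IsPeriodicPt (Fav a v) (m' + n') a := by
    rw [IsPeriodicPt, IsFixedPt, add_comm, iterate_add_apply, hP, hQ]
  have p2 : IsPeriodicPt (Fav a v) (m' + n') (-a) := by
    rw [IsPeriodicPt, IsFixedPt, iterate_add_apply, hQ, hP]
  constructor
  · change (Fav a v)^[m] a = -a
    rw [show m = m' + (m' + n') * k by omega, iterate_add_apply, (p1.mul_const k).eq, hP]
  · change (Fav a v)^[n] (-a) = a
    rw [show n = n' + (m' + n') * l by omega, iterate_add_apply, (p2.mul_const l).eq, hQ]

end

theorem stmt3 (m' n' m n : ℕ) (h0 : 1 ≤ m' + n') (hm : m' ≤ m) (hn : n' ≤ n) :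
    (Bset m' n' ⊆ Bset m n ↔ m ≡ m' [MOD m' + n'] ∧ n ≡ n' [MOD m' + n']) ∧
    (Bset m' n' ⊆ Bset m n → (m' + n') ∣ (m + n)) := by
  refine ⟨⟨forward m' n' m n h0 hm hn, fun h => backward m' n' m n hm hn h.1 h.2⟩, fun hB => ?_⟩
  obtain ⟨h1, h2⟩ := forward m' n' m n h0 hm hn hB
  have := h1.add h2
  exact (Nat.modEq_zero_iff_dvd).1 (this.trans ((Nat.modEq_zero_iff_dvd).2 dvd_rfl))
end

section
/- Let m, n ≥ 0 be integers with p = m + n ≥ 1, and let p′ be a positive divisor of p. Let m′ be the unique integer with 1 ≤ m′ ≤ p′ and m′ ≡ m (mod p′), and set n′ = p′ − m′. Then B(m,n) ∩ S_{p′} = B(m′,n′) ∩ S_{p′}. -/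
open Function Set

/-- `z` has exact period `p ≥ 1` under `F`. -/
def HasExactPeriod (F : ℂ → ℂ) (z : ℂ) (p : ℕ) : Prop :=
  F^[p] z = z ∧ ∀ j, 0 < j → j < p → F^[j] z ≠ z

/-- The parameter curve `S_p`: the set of `(a,v)` such that `a` has exact period `p`
under `F_{a,v}`. -/
noncomputable def Sper (p : ℕ) : Set (ℂ × ℂ) :=
  {w | HasExactPeriod (Fav w.1 w.2) w.1 p}

theorem stmt4 (m n p' m' : ℕ) (hp : 1 ≤ m + n) (hp' : 0 < p') (hdvd : p' ∣ m + n)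
    (hm'1 : 1 ≤ m') (hm'2 : m' ≤ p') (hcong : m' ≡ m [MOD p']) :
    Bset m n ∩ Sper p' = Bset m' (p' - m') ∩ Sper p' := by
  ext ⟨a, v⟩
  simp only [Bset, Sper, HasExactPeriod, Set.mem_inter_iff, Set.mem_setOf_eq]
  refine and_congr_left ?_
  rintro ⟨hper, -⟩
  generalize Fav a v = F at *
  have hP : Function.IsPeriodicPt F p' a := hper
  have key : F^[m] a = F^[m'] a := by
    rw [← hP.iterate_mod_apply m, ← hP.iterate_mod_apply m', hcong]
  have h1 : F^[n + m] a = a := by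
    have h := hP.trans_dvd hdvd
    rw [add_comm]
    exact h
  have h2 : F^[(p' - m') + m'] a = a := by
    rw [Nat.sub_add_cancel hm'2]
    exact hper
  rw [Function.iterate_add_apply] at h1 h2
  constructor
  · rintro ⟨h, -⟩
    have h' := key.symm.trans h
    exact ⟨h', by rwa [h'] at h2⟩
  · rintro ⟨h, -⟩
    have h' := key.trans h
    exact ⟨h', by rwa [h'] at h1⟩
end

section
/- Let k ≥ 0 and D ≥ 1 be integers, and let f : ℝ → ℝ be a continuous strictly increasing map satisfying f(x + 1) = f(x) + D for all x ∈ ℝ (a lift of an orientation-preserving circle map of degree D). Assume that the set K = {x ∈ [0,1) : f(x) − x ∈ ℤ} of fixed points of the induced circle map has exactly k elements, and that each x₀ ∈ K is topologically repelling, meaning there is ε > 0 such that f(y) − y < f(x₀) − x₀ for all y ∈ (x₀ − ε, x₀) and f(y) − y > f(x₀) − x₀ for all y ∈ (x₀, x₀ + ε). Then D = k + 1. -/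
open Function Set

theorem stmt14 (k : ℕ) (D : ℤ) (hD : 1 ≤ D) (f : ℝ → ℝ)
    (hcont : Continuous f) (hmono : StrictMono f)
    (hlift : ∀ x : ℝ, f (x + 1) = f x + D)
    (K : Set ℝ) (hK : K = {x ∈ Set.Ico (0 : ℝ) 1 | ∃ j : ℤ, f x - x = j})
    (hKfin : K.Finite) (hKcard : K.ncard = k)
    (hrep : ∀ x₀ ∈ K, ∃ ε > (0 : ℝ),
      (∀ y, x₀ - ε < y → y < x₀ → f y - y < f x₀ - x₀) ∧
      (∀ y, x₀ < y → y < x₀ + ε → f y - y > f x₀ - x₀)) :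
    D = k + 1 := by
  obtain ⟨g, hg⟩ : ∃ g : ℝ → ℝ, ∀ x, g x = f x - x := ⟨fun x => f x - x, fun _ => rfl⟩
  have gc : Continuous g := by
    have : g = fun x => f x - x := funext hg
    rw [this]; fun_prop
  simp only [← hg] at hrep hK
  have g1 : ∀ x, g (x + 1) = g x + (D - 1) := by
    intro x; rw [hg, hg, hlift]; ring
  have gn : ∀ (n : ℤ) (x : ℝ), g (x + n) = g x + n * (D - 1) := by
    intro n
    induction n using Int.induction_on with
    | zero => intro x; simp
    | succ i ih =>
      intro x
      have := g1 (x + (i : ℤ))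
      rw [ih] at this
      push_cast at *
      rw [← add_assoc, this]; ring
    | pred i ih =>
      intro x
      have := g1 (x + ((-(i : ℤ) - 1 : ℤ) : ℝ))
      have h2 := ih x
      push_cast at *
      rw [show x + (-(i : ℝ) - 1) + 1 = x + -i by ring, h2] at this
      linarith
  have rep : ∀ (x : ℝ) (j : ℤ), g x = j → ∃ ε > (0 : ℝ),
      (∀ y, x - ε < y → y < x → g y < j) ∧ (∀ y, x < y → y < x + ε → (j : ℝ) < g y) := by
    intro x j hx
    have e : ∀ y, g (y - ⌊x⌋) = g y - ⌊x⌋ * (D - 1) := by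
      intro y
      have := gn ⌊x⌋ (y - ⌊x⌋)
      rw [sub_add_cancel] at this
      linarith
    have hm : x - ⌊x⌋ ∈ K := by
      rw [hK]
      refine ⟨⟨Int.fract_nonneg x, Int.fract_lt_one x⟩, j - ⌊x⌋ * (D - 1), ?_⟩
      rw [e, hx]; push_cast; ring
    obtain ⟨ε, h0, h1, h2⟩ := hrep _ hm
    refine ⟨ε, h0, fun y a b => ?_, fun y a b => ?_⟩
    · have := h1 (y - ⌊x⌋) (by linarith) (by linarith)
      rw [e, e] at this; linarith
    · have := h2 (y - ⌊x⌋) (by linarith) (by linarith)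
      rw [e, e] at this; linarith
  have A : ∀ (a b : ℝ) (j : ℤ), g a = j → a < b → (j : ℝ) < g b := by
    intro a b j ha hab
    by_contra! hb
    obtain ⟨ε, h0, -, h2⟩ := rep a j ha
    have hp := h2 (a + ε / 2) (by linarith) (by linarith)
    have hpb : a + ε / 2 ≤ b := by
      by_contra! h
      have := h2 b hab (by linarith)
      linarith
    have hcomp : IsCompact (Icc (a + ε / 2) b ∩ {x | g x ≤ j}) :=
      isCompact_Icc.inter_right (isClosed_le gc continuous_const)
    obtain ⟨c, ⟨⟨hc1, hc2⟩, hc3⟩, hmin⟩ := hcomp.exists_isLeast ⟨b, ⟨hpb, le_rfl⟩, hb⟩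
    simp only [mem_setOf_eq] at hc3
    have hlt : a + ε / 2 < c := by
      rcases hc1.lt_or_eq with h | h
      · exact h
      · rw [← h] at hc3; linarith
    have hcj : g c = j := by
      obtain ⟨z, ⟨hz1, hz2⟩, hz⟩ := intermediate_value_Icc' hc1 gc.continuousOn ⟨hc3, hp.le⟩
      have := hmin ⟨⟨hz1, hz2.trans hc2⟩, hz.le⟩
      rw [← hz, le_antisymm hz2 this]
    obtain ⟨δ, d0, d1, -⟩ := rep c j hcj
    obtain ⟨y, hy1, hy2⟩ := exists_between (max_lt hlt (by linarith : c - δ < c))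
    have hy3 := d1 y ((le_max_right _ _).trans_lt hy1) hy2
    have := hmin ⟨⟨((le_max_left _ _).trans_lt hy1).le, hy2.le.trans hc2⟩, hy3.le⟩
    linarith
  have B : ∀ (a b : ℝ) (j : ℤ), g b = j → a < b → g a < j := by
    intro a b j hb hab
    by_contra! ha
    obtain ⟨δ, d0, d1, -⟩ := rep b j hb
    obtain ⟨y, hy1, hy2⟩ := exists_between (max_lt hab (by linarith : b - δ < b))
    have hy3 := d1 y ((le_max_right _ _).trans_lt hy1) hy2
    obtain ⟨z, ⟨hz1, hz2⟩, hz⟩ := intermediate_value_Icc'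
      ((le_max_left _ _).trans_lt hy1).le gc.continuousOn ⟨hy3.le, ha⟩
    have := A z b j hz (by linarith)
    linarith
  have g01 : g 1 = g 0 + (D - 1) := by simpa using g1 0
  have hinj : InjOn g K := by
    intro x hx y hy hxy
    rw [hK] at hx hy
    obtain ⟨-, j, hj⟩ := hx
    rcases lt_trichotomy x y with h | h | h
    · have := A x y j hj h; linarith
    · exact h
    · have := B y x j hj h; linarith
  have himg : g '' K = (fun n : ℤ => (n : ℝ)) '' (Finset.Ico ⌈g 0⌉ (⌈g 0⌉ + (D - 1)) : Finset ℤ) := by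
    have hceil : ⌈g 0⌉ + (D - 1) = ⌈g 1⌉ := by
      rw [g01, ← Int.ceil_add_intCast]; push_cast; rfl
    rw [hceil]
    ext t
    simp only [mem_image, Finset.coe_Ico, mem_Ico, Int.ceil_le, Int.lt_ceil]
    constructor
    · rintro ⟨x, hx, rfl⟩
      rw [hK] at hx
      obtain ⟨⟨h0, h1⟩, j, hj⟩ := hx
      refine ⟨j, ⟨?_, ?_⟩, hj.symm⟩
      · rcases h0.lt_or_eq with h | h
        · exact (B 0 x j hj h).le
        · rw [← hj, ← h]
      · exact A x 1 j hj h1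
    · rintro ⟨j, ⟨h0, h1⟩, rfl⟩
      obtain ⟨z, ⟨hz1, hz2⟩, hz⟩ := intermediate_value_Icc zero_le_one gc.continuousOn ⟨h0, h1.le⟩
      refine ⟨z, ?_, hz⟩
      rw [hK]
      refine ⟨⟨hz1, lt_of_le_of_ne hz2 ?_⟩, j, hz⟩
      rintro rfl
      linarith
  have hcard := ncard_image_of_injOn hinj
  rw [himg, ncard_image_of_injective _ Int.cast_injective, ncard_coe_finset, Int.card_Ico, hKcard] at hcard
  omega
end
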